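/- arXiv:2303.05435 — 2 statements merged into one kernel-verified Lean document; each statement's English description precedes it below -/
import Mathlib

section
/- Fix 0 < η < 1/2. There exists a constant C = C(η) > 0 such that the following holds. Let n₁, n₂ be positive integers, let B ∈ ℝ^{n₁×n₂}, let E ⊆ {1,…,n₁} with |E| ≥ n₁(1 − η/3), let d be an integer with 1 ≤ d ≤ |E|/2, and fix a 0/1 vector z indexed by {1,…,n₁}∖E. Let x ∈ {0,1}^{n₁} be random, with its restriction to E uniformly distributed over 0/1 vectors with exactly d ones, and its restriction to the complement of E equal to z. Let B′ be the n₁ × (n₂+1) matrix obtained from B by appending x as a new column. If the transpose Bᵀ has a kernel vector in ℝ^{n₁} which is η-balanced, then Pr[rank B′ ≥ rank B + 1] ≥ 1 − C/√d. -/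
open scoped Classical
open Finset

/-- A vector is `η`-balanced if all of its level sets have size at most `(1−η)·n`. -/
def IsBalancedVec (η : ℝ) {n : ℕ} (v : Fin n → ℝ) : Prop :=
  ∀ a : ℝ, ({i | v i = a}.ncard : ℝ) ≤ (1 - η) * n

/-- The random 0/1 vector determined by the set `T ⊆ E` of coordinates of `E` equal
to 1, with the coordinates outside `E` given by `z`. -/
def xVec {n : ℕ} (E T : Finset (Fin n)) (z : Fin n → ℝ) : Fin n → ℝ :=
  fun i => if i ∈ T then 1 else if i ∈ E then 0 else z i

/-- The matrix `B` with the column `x` appended. -/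
noncomputable def appendCol {n₁ n₂ : ℕ} (B : Matrix (Fin n₁) (Fin n₂) ℝ)
    (x : Fin n₁ → ℝ) : Matrix (Fin n₁) (Option (Fin n₂)) ℝ :=
  Matrix.of fun i j => j.elim (x i) fun k => B i k

/-- Appending a column not orthogonal to a left kernel vector increases the rank. -/
lemma rank_appendCol_of_dot_ne {n₁ n₂ : ℕ} (B : Matrix (Fin n₁) (Fin n₂) ℝ)
    (x v : Fin n₁ → ℝ) (hv : B.transpose.mulVec v = 0) (hx : ∑ i, v i * x i ≠ 0) :
    B.rank + 1 ≤ (appendCol B x).rank := by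
  rw [Matrix.rank, Matrix.rank, Nat.succ_le_iff]
  apply Submodule.finrank_lt_finrank_of_lt
  rw [Matrix.range_mulVecLin, Matrix.range_mulVecLin]
  refine lt_of_le_of_ne ?_ ?_
  · apply Submodule.span_mono
    rintro _ ⟨k, rfl⟩
    exact ⟨some k, by ext i; simp [appendCol, Matrix.col]⟩
  · intro heq
    have hmem : x ∈ Submodule.span ℝ (Set.range B.col) := by
      rw [heq]
      apply Submodule.subset_span
      exact ⟨none, by ext i; simp [appendCol, Matrix.col]⟩
    apply hx
    clear heq hx
    induction hmem using Submodule.span_induction with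
    | mem y hy =>
      obtain ⟨k, rfl⟩ := hy
      have := congrFun hv k
      simp only [Matrix.mulVec, dotProduct, Matrix.transpose_apply, Pi.zero_apply] at this
      rw [← this]
      exact Finset.sum_congr rfl fun i _ => by simp [Matrix.col, mul_comm]
    | zero => simp
    | add y w _ _ hy hw => simp [mul_add, Finset.sum_add_distrib, hy, hw]
    | smul c y _ hy =>
      have : ∑ i, v i * (c • y) i = c * ∑ i, v i * y i := by
        rw [Finset.mul_sum]
        exact Finset.sum_congr rfl fun i _ => by simp; ring
      rw [this, hy, mul_zero]

/-- Level `(a, j)`: pairs of an `a`-subset of `L` and a `j`-subset of `H`. -/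
noncomputable def lev {α : Type*} (L H : Finset α) (a j : ℕ) : Finset (Finset α × Finset α) :=
  powersetCard a L ×ˢ powersetCard j H

/-- The total weight of a pair. -/
noncomputable def wt {α : Type*} (v : α → ℝ) (p : Finset α × Finset α) : ℝ :=
  ∑ i ∈ p.1, v i + ∑ i ∈ p.2, v i

lemma card_lev {α : Type*} (L H : Finset α) (a j : ℕ) :
    (lev L H a j).card = L.card.choose a * H.card.choose j := by
  simp [lev, card_product]

lemma level_match {α : Type*} (L H : Finset α) (v : α → ℝ)
    (hLH : ∀ x ∈ L, ∀ y ∈ H, v x < v y) (s : ℝ) (a j : ℕ) :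
    ((lev L H (a + 1) j).filter fun p => s ≤ wt v p).card * ((a + 1) * (H.card - j)) ≤
      ((lev L H a (j + 1)).filter fun p => s < wt v p).card * ((L.card - a) * (j + 1)) := by
  apply card_mul_le_card_mul (fun p q : Finset α × Finset α =>
    ∃ x ∈ p.1, ∃ y ∈ H \ p.2, q = (p.1.erase x, insert y p.2))
  · rintro ⟨A, B⟩ hp
    simp only [lev, mem_filter, mem_product, mem_powersetCard] at hp
    obtain ⟨⟨⟨hA, hAc⟩, ⟨hB, hBc⟩⟩, hs⟩ := hp
    have hcard : (A ×ˢ (H \ B)).card = (a + 1) * (H.card - j) := by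
      rw [card_product, card_sdiff_of_subset hB, hAc, hBc]
    rw [← hcard]
    apply card_le_card_of_injOn (fun q => (A.erase q.1, insert q.2 B))
    · rintro ⟨x, y⟩ hq
      simp only [coe_product, Set.mem_prod, mem_coe, mem_sdiff] at hq
      obtain ⟨hx, hy, hyB⟩ := hq
      simp only [coe_bipartiteAbove, mem_coe, mem_bipartiteAbove, mem_filter, lev, mem_product, mem_powersetCard, Set.mem_ofPred_eq]
      refine ⟨⟨⟨⟨(erase_subset _ _).trans hA, by rw [card_erase_of_mem hx]; omega⟩,
        ⟨insert_subset hy hB, by rw [card_insert_of_notMem hyB]; omega⟩⟩, ?_⟩,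
        x, hx, y, by simp [hy, hyB], rfl⟩
      simp only [wt] at hs ⊢
      rw [sum_insert hyB]
      have := add_sum_erase A v hx
      have := hLH x (hA hx) y hy
      linarith
    · rintro ⟨x, y⟩ hq ⟨x', y'⟩ hq' h
      simp only [coe_product, Set.mem_prod, mem_coe, mem_sdiff] at hq hq'
      simp only [Prod.mk.injEq] at h ⊢
      constructor
      · by_contra hne
        have : x ∈ A.erase x' := mem_erase.2 ⟨hne, hq.1⟩
        rw [← h.1] at this
        simp at this
      · have : y ∈ insert y' B := by rw [← h.2]; simp
        rcases mem_insert.1 this with h | h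
        · exact h
        · exact absurd h hq.2.2
  · rintro ⟨A, B⟩ hp
    simp only [lev, mem_filter, mem_product, mem_powersetCard] at hp
    obtain ⟨⟨⟨hA, hAc⟩, ⟨hB, hBc⟩⟩, hs⟩ := hp
    have hcard : ((L \ A) ×ˢ B).card = (L.card - a) * (j + 1) := by
      rw [card_product, card_sdiff_of_subset hA, hAc, hBc]
    rw [← hcard]
    refine (card_le_card ?_).trans
      (card_image_le (f := fun q : α × α => (insert q.1 A, B.erase q.2)))
    rintro ⟨A', B'⟩ hq
    simp only [mem_bipartiteBelow, mem_filter, lev, mem_product, mem_powersetCard] at hq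
    obtain ⟨⟨⟨⟨hA', _⟩, ⟨hB', _⟩⟩, _⟩, x, hx, y, hy, h⟩ := hq
    simp only [Prod.mk.injEq, mem_sdiff] at h hy
    obtain ⟨rfl, rfl⟩ := h
    rw [mem_image]
    refine ⟨(x, y), ?_, ?_⟩
    · simp [hA' hx]
    · simp [insert_erase hx, erase_insert hy.2]

lemma level_density {α : Type*} (L H : Finset α) (v : α → ℝ)
    (hLH : ∀ x ∈ L, ∀ y ∈ H, v x < v y) (s : ℝ) (a j : ℕ) (ha : a + 1 ≤ L.card)
    (hj : j + 1 ≤ H.card) :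
    (((lev L H (a + 1) j).filter fun p => s ≤ wt v p).card : ℝ) / (lev L H (a + 1) j).card ≤
      (((lev L H a (j + 1)).filter fun p => s < wt v p).card : ℝ) /
        (lev L H a (j + 1)).card := by
  have h := level_match L H v hLH s a j
  rw [card_lev, card_lev]
  have e1 := Nat.choose_succ_right_eq L.card a
  have e2 := Nat.choose_succ_right_eq H.card j
  have p1 : 0 < L.card.choose (a + 1) := Nat.choose_pos ha
  have p2 : 0 < L.card.choose a := Nat.choose_pos (by omega)
  have p3 : 0 < H.card.choose (j + 1) := Nat.choose_pos hj
  have p4 : 0 < H.card.choose j := Nat.choose_pos (by omega)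
  have p5 : 0 < H.card - j := by omega
  have p6 : 0 < L.card - a := by omega
  rw [div_le_div_iff₀ (by positivity) (by positivity)]
  norm_cast
  generalize L.card.choose (a + 1) = c1 at *
  generalize L.card.choose a = c2 at *
  generalize H.card.choose (j + 1) = c3 at *
  generalize H.card.choose j = c4 at *
  generalize H.card - j = u at *
  generalize L.card - a = w at *
  generalize (filter (fun p => s ≤ wt v p) (lev L H (a + 1) j)).card = G at *
  generalize (filter (fun p => s < wt v p) (lev L H a (j + 1))).card = U at *
  have hpos : 0 < (a + 1) * u := by positivity
  apply Nat.le_of_mul_le_mul_right _ hpos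
  calc G * (c2 * c3) * ((a + 1) * u) = (G * ((a + 1) * u)) * (c2 * c3) := by ring
    _ ≤ (U * (w * (j + 1))) * (c2 * c3) := Nat.mul_le_mul_right _ h
    _ = U * ((c2 * w) * (c3 * (j + 1))) := by ring
    _ = U * ((c1 * (a + 1)) * (c4 * u)) := by rw [e1, e2]
    _ = U * (c1 * c4) * ((a + 1) * u) := by ring

lemma lym_aux {α : Type*} (L H : Finset α) (v : α → ℝ)
    (hLH : ∀ x ∈ L, ∀ y ∈ H, v x < v y) (s : ℝ) (j : ℕ) :
    ∀ a, a ≤ L.card → j ≤ H.card →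
    ∑ i ∈ range (j + 1), (((lev L H (a + j - i) i).filter fun p => wt v p = s).card : ℝ) /
        (lev L H (a + j - i) i).card ≤
      (((lev L H a j).filter fun p => s ≤ wt v p).card : ℝ) / (lev L H a j).card := by
  induction j with
  | zero =>
    intro a ha _
    simp only [zero_add, range_one, sum_singleton, add_zero, Nat.sub_zero]
    gcongr with p
    intro h; exact h.ge
  | succ j ih =>
    intro a ha hj
    rw [sum_range_succ]
    have hprev : ∑ i ∈ range (j + 1),
        (((lev L H (a + (j + 1) - i) i).filter fun p => wt v p = s).card : ℝ) /
        (lev L H (a + (j + 1) - i) i).card ≤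
        (((lev L H a (j + 1)).filter fun p => s < wt v p).card : ℝ) /
        (lev L H a (j + 1)).card := by
      rcases Nat.lt_or_ge a L.card with hlt | hge
      · have h1 := ih (a + 1) hlt (by omega)
        have h2 := level_density L H v hLH s a j hlt hj
        have e : a + (j + 1) = a + 1 + j := by ring
        rw [e]
        exact h1.trans h2
      · have : ∀ i ∈ range (j + 1),
            (((lev L H (a + (j + 1) - i) i).filter fun p => wt v p = s).card : ℝ) /
            (lev L H (a + (j + 1) - i) i).card = 0 := by
          intro i hi
          have : (lev L H (a + (j + 1) - i) i).card = 0 := by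
            rw [card_lev, Nat.choose_eq_zero_of_lt (by have := mem_range.1 hi; omega), zero_mul]
          rw [this]; simp
        rw [sum_eq_zero this]
        positivity
    have e : a + (j + 1) - (j + 1) = a := by omega
    rw [e]
    have hsplit : ((lev L H a (j + 1)).filter fun p => s ≤ wt v p).card =
        ((lev L H a (j + 1)).filter fun p => s < wt v p).card +
        ((lev L H a (j + 1)).filter fun p => wt v p = s).card := by
      rw [← card_union_of_disjoint]
      · congr 1
        ext p
        simp only [mem_filter, mem_union, le_iff_lt_or_eq, eq_comm (a := s)]
        tauto
      · rw [disjoint_filter]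
        intro p _ h1 h2
        exact absurd h2 h1.ne'
    rw [hsplit]
    push_cast
    rw [add_div]
    linarith

lemma lym_sum {α : Type*} (L H : Finset α) (v : α → ℝ)
    (hLH : ∀ x ∈ L, ∀ y ∈ H, v x < v y) (s : ℝ) (d : ℕ) (hd : d ≤ L.card + H.card) (M : ℝ)
    (hM0 : 0 ≤ M)
    (hM : ∀ i ≤ d, ((L.card.choose (d - i) * H.card.choose i : ℕ) : ℝ) ≤ M) :
    ∑ i ∈ range (d + 1), (((lev L H (d - i) i).filter fun p => wt v p = s).card : ℝ) ≤ M := by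
  have key : ∑ i ∈ range (d + 1), (((lev L H (d - i) i).filter fun p => wt v p = s).card : ℝ) /
      (lev L H (d - i) i).card ≤ 1 := by
    rcases le_total d H.card with h | h
    · have := lym_aux L H v hLH s d 0 (by omega) h
      rw [zero_add] at this
      refine this.trans (div_le_one_of_le₀ ?_ (by positivity))
      exact_mod_cast card_filter_le _ _
    · have := lym_aux L H v hLH s H.card (d - H.card) (by omega) le_rfl
      rw [Nat.sub_add_cancel h] at this
      rw [← sum_subset (s₁ := range (H.card + 1))]
      · refine this.trans (div_le_one_of_le₀ ?_ (by positivity))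
        exact_mod_cast card_filter_le _ _
      · intro i; simp only [mem_range]; omega
      · intro i _ hi
        have : (lev L H (d - i) i).card = 0 := by
          rw [card_lev, Nat.choose_eq_zero_of_lt (n := H.card), mul_zero]
          simp only [mem_range] at hi; omega
        rw [this]; simp
  calc _ ≤ ∑ i ∈ range (d + 1), M * ((((lev L H (d - i) i).filter fun p => wt v p = s).card : ℝ) /
      (lev L H (d - i) i).card) := by
        apply sum_le_sum
        intro i hi
        have hle := card_filter_le (lev L H (d - i) i) (fun p => wt v p = s)
        have hMi := hM i (by simpa [Nat.lt_succ_iff] using hi)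
        rw [← card_lev] at hMi
        generalize (lev L H (d - i) i).card = N at *
        rcases Nat.eq_zero_or_pos N with h0 | h0
        · subst h0
          have := Nat.le_zero.1 hle
          rw [this]; simp
        · have hN : (0 : ℝ) < N := by exact_mod_cast h0
          rw [← mul_div_assoc, le_div_iff₀ hN, mul_comm]
          gcongr
    _ ≤ M := by
        rw [← mul_sum]
        exact mul_le_of_le_one_right hM0 key

lemma count_le {α : Type*} (E L H : Finset α) (hE : ∀ i, i ∈ E ↔ i ∈ L ∨ i ∈ H) (hdis : Disjoint L H) (v : α → ℝ)
    (hLH : ∀ x ∈ L, ∀ y ∈ H, v x < v y) (s : ℝ) (d : ℕ) (hd : d ≤ L.card + H.card) (M : ℝ)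
    (hM0 : 0 ≤ M)
    (hM : ∀ i ≤ d, ((L.card.choose (d - i) * H.card.choose i : ℕ) : ℝ) ≤ M) :
    (((powersetCard d E).filter fun T => ∑ i ∈ T, v i = s).card : ℝ) ≤ M := by
  obtain rfl : E = L ∪ H := by ext i; simp [hE]
  refine le_trans ?_ (lym_sum L H v hLH s d hd M hM0 hM)
  rw [card_eq_sum_card_fiberwise (f := fun T => (T ∩ H).card) (t := range (d + 1))]
  · push_cast
    apply sum_le_sum
    intro i hi
    norm_cast
    have hsp : ∀ T ⊆ L ∪ H, T = (T ∩ L) ∪ (T ∩ H) := by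
      intro T hT
      rw [← inter_union_distrib_left, inter_eq_left.2 hT]
    have hdj : ∀ T, Disjoint (T ∩ L) (T ∩ H) := fun T =>
      hdis.mono inter_subset_right inter_subset_right
    apply card_le_card_of_injOn (fun T => (T ∩ L, T ∩ H))
    · intro T hT
      simp only [coe_filter, mem_filter, mem_powersetCard, Set.mem_ofPred_eq] at hT
      obtain ⟨⟨⟨hT, hc⟩, hs⟩, hi⟩ := hT
      have h1 := card_union_of_disjoint (hdj T)
      rw [← hsp T hT] at h1
      have h2 := sum_union (f := v) (hdj T)
      rw [← hsp T hT] at h2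
      rw [mem_coe, mem_filter]
      simp only [lev, mem_product, mem_powersetCard, wt]
      exact ⟨⟨⟨inter_subset_right, by omega⟩, inter_subset_right, hi⟩, by linarith⟩
    · intro T hT T' hT' h
      simp only [coe_filter, mem_filter, mem_powersetCard, Set.mem_ofPred_eq] at hT hT'
      simp only [Prod.mk.injEq] at h
      rw [hsp T hT.1.1.1, hsp T' hT'.1.1.1, h.1, h.2]
  · intro T hT
    simp only [coe_filter, mem_powersetCard, Set.mem_ofPred_eq] at hT
    simp only [coe_range, Set.mem_Iio, Nat.lt_succ_iff]
    rw [← hT.1.2]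
    exact card_le_card inter_subset_left

/-- Ratio identity for hypergeometric weights. -/
lemma hyp_ratio (l h d j : ℕ) (hj : j < d) :
    ((l.choose (d - (j + 1)) * h.choose (j + 1) : ℕ) : ℝ) * (((j : ℝ) + 1) * ((l : ℝ) - d + j + 1)) =
      ((l.choose (d - j) * h.choose j : ℕ) : ℝ) * (((h : ℝ) - j) * ((d : ℝ) - j)) := by
  obtain ⟨a, rfl⟩ : ∃ a, d = j + 1 + a := ⟨d - (j + 1), by omega⟩
  have x1 : j + 1 + a - (j + 1) = a := by omega
  have x2 : j + 1 + a - j = a + 1 := by omega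
  rw [x1, x2]
  have key : ∀ n k : ℕ, (n.choose (k + 1) : ℝ) * ((k : ℝ) + 1) = n.choose k * ((n : ℝ) - k) := by
    intro n k
    rcases le_or_gt k n with hk | hk
    · have := Nat.choose_succ_right_eq n k
      rw [← Nat.cast_sub hk]
      exact_mod_cast this
    · rw [Nat.choose_eq_zero_of_lt hk, Nat.choose_eq_zero_of_lt (by omega)]; simp
  have k1 := key l a
  have k2 := key h j
  push_cast
  linear_combination (l.choose a : ℝ) * ((l : ℝ) - a) * k2 - (h.choose j : ℝ) * ((h : ℝ) - j) * k1

set_option maxHeartbeats 1600000 in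
lemma hyp_max (δ : ℝ) (hδ : 0 < δ) (hδ2 : δ ≤ 1 / 2) (l h d : ℕ) (hd : 1 ≤ d)
    (hdm : 2 * d ≤ l + h) (hl : δ * ((l : ℝ) + h) ≤ l) (hh : δ * ((l : ℝ) + h) ≤ h) :
    ∀ i ≤ d, ((l.choose (d - i) * h.choose i : ℕ) : ℝ) ≤
      4 / (δ * Real.sqrt d) * ((l + h).choose d : ℕ) := by
  set N : ℕ → ℝ := fun j => ((l.choose (d - j) * h.choose j : ℕ) : ℝ) with hN
  have hN0 : ∀ j, 0 ≤ N j := fun j => by simp only [hN]; positivity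
  have hsum : ((l + h).choose d : ℝ) = ∑ j ∈ range (d + 1), N j := by
    rw [add_comm, Nat.add_choose_eq, Nat.sum_antidiagonal_eq_sum_range_succ_mk]
    push_cast [hN]
    exact sum_congr rfl fun i _ => mul_comm _ _
  have hspos : 0 < Real.sqrt d := Real.sqrt_pos.2 (by exact_mod_cast hd)
  have hsq : Real.sqrt d * Real.sqrt d = d := Real.mul_self_sqrt (by positivity)
  obtain ⟨j, hjr, hjmax⟩ := exists_max_image (range (d + 1)) N ⟨0, by simp⟩
  have hjd : j ≤ d := by simpa [Nat.lt_succ_iff] using hjr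
  suffices hmain : N j ≤ 4 / (δ * Real.sqrt d) * ((l + h).choose d : ℕ) by
    intro i hi
    exact (hjmax i (by simpa [Nat.lt_succ_iff] using hi)).trans hmain
  rcases (hN0 j).eq_or_lt with h0 | hpos
  · rw [← h0]; positivity
  have hposn : 0 < l.choose (d - j) * h.choose j := by
    have hpos' := hpos
    simp only [hN] at hpos'
    exact_mod_cast hpos'
  have hjl : d - j ≤ l := by
    by_contra hc
    rw [Nat.choose_eq_zero_of_lt (by omega)] at hposn; simp at hposn
  have hjh : j ≤ h := by
    by_contra hc
    rw [Nat.choose_eq_zero_of_lt (n := h) (by omega)] at hposn; simp at hposn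
  have hjlR : (d : ℝ) ≤ l + j := by exact_mod_cast (by omega : d ≤ l + j)
  have hjhR : (j : ℝ) ≤ h := by exact_mod_cast hjh
  have hjdR : (j : ℝ) ≤ d := by exact_mod_cast hjd
  have hdR : (1 : ℝ) ≤ d := by exact_mod_cast hd
  have hdmR : 2 * (d : ℝ) ≤ l + h := by exact_mod_cast hdm
  have hj0 : (0 : ℝ) ≤ j := by positivity
  have hl0 : (0 : ℝ) ≤ l := by positivity
  have hh0 : (0 : ℝ) ≤ h := by positivity
  -- location of the mode
  have up : ((h : ℝ) + 1) * (d + 1) ≤ (j + 1) * (l + h + 2) := by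
    rcases hjd.eq_or_lt with he | hlt
    · subst he
      nlinarith
    · have hr := hyp_ratio l h d j hlt
      have hm := hjmax (j + 1) (by simp; omega)
      have hr' : N (j + 1) * (((j : ℝ) + 1) * ((l : ℝ) - d + j + 1)) =
        N j * (((h : ℝ) - j) * ((d : ℝ) - j)) := hr
      have hx : (0 : ℝ) ≤ ((j : ℝ) + 1) * ((l : ℝ) - d + j + 1) :=
        mul_nonneg (by linarith) (by linarith)
      have := mul_le_mul_of_nonneg_right hm hx
      rw [hr'] at this
      have := le_of_mul_le_mul_left this hpos
      nlinarith
  have lo : (j : ℝ) * (l + h + 2) ≤ ((h : ℝ) + 1) * (d + 1) := by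
    rcases Nat.eq_zero_or_pos j with he | hlt
    · subst he
      push_cast; nlinarith
    · obtain ⟨k, rfl⟩ : ∃ k, j = k + 1 := ⟨j - 1, by omega⟩
      have hr := hyp_ratio l h d k (by omega)
      have hm := hjmax k (by simp; omega)
      have hr' : N (k + 1) * (((k : ℝ) + 1) * ((l : ℝ) - d + k + 1)) =
        N k * (((h : ℝ) - k) * ((d : ℝ) - k)) := hr
      push_cast at hjhR hjdR hjlR ⊢
      have hx : (0 : ℝ) ≤ ((h : ℝ) - k) * ((d : ℝ) - k) :=
        mul_nonneg (by linarith) (by linarith)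
      have := mul_le_mul_of_nonneg_right hm hx
      rw [← hr'] at this
      have := le_of_mul_le_mul_left this hpos
      nlinarith
  have hm2 : (0 : ℝ) < l + h + 2 := by positivity
  have hl' : δ * ((l : ℝ) + h + 2) ≤ l + 1 := by linarith
  have hh' : δ * ((l : ℝ) + h + 2) ≤ h + 1 := by linarith
  have b1 : δ * d ≤ (j : ℝ) + 1 := by
    have : δ * ((l : ℝ) + h + 2) * (d + 1) ≤ (h + 1) * (d + 1) := by gcongr
    have : (δ * (d + 1)) * ((l : ℝ) + h + 2) ≤ (j + 1) * ((l : ℝ) + h + 2) := by linarith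
    have := le_of_mul_le_mul_right this hm2
    linarith
  have b2 : δ * ((l : ℝ) + h + 2) / 2 ≤ l - d + j + 1 := by
    have h1 : ((l : ℝ) + 1) * (l + h + 1 - d) ≤ (l - d + j + 1) * (l + h + 2) := by nlinarith
    have h2 : δ * ((l : ℝ) + h + 2) * ((l + h + 2) / 2) ≤ ((l : ℝ) + 1) * (l + h + 1 - d) := by
      apply mul_le_mul hl' (by linarith) (by positivity) (by positivity)
    have : (δ * ((l : ℝ) + h + 2) / 2) * (l + h + 2) ≤ (l - d + j + 1) * (l + h + 2) := by linarith
    exact le_of_mul_le_mul_right this hm2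
  set K : ℕ := ⌊δ * Real.sqrt d / 2⌋₊ with hK
  have hKle : (K : ℝ) ≤ δ * Real.sqrt d / 2 := Nat.floor_le (by positivity)
  have hKlt : δ * Real.sqrt d / 2 < K + 1 := Nat.lt_floor_add_one _
  set ε : ℝ := 2 * K / (δ ^ 2 * d) with hε
  have hδd : 0 < δ ^ 2 * d := by positivity
  have hε0 : 0 ≤ ε := by positivity
  have hKε : K * ε ≤ 1 / 2 := by
    rw [hε, ← mul_div_assoc, div_le_iff₀ hδd]
    have : (K : ℝ) * K ≤ (δ * Real.sqrt d / 2) * (δ * Real.sqrt d / 2) := by gcongr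
    nlinarith
  have step : ∀ k : ℕ, k ≤ K → j + k ≤ d ∧ (1 - k * ε) * N j ≤ N (j + k) := by
    intro k
    induction k with
    | zero => intro _; exact ⟨by omega, by simp⟩
    | succ k ih =>
      intro hk
      obtain ⟨i1, i2⟩ := ih (by omega)
      have hkK : (k : ℝ) + 1 ≤ K := by exact_mod_cast hk
      have hk0 : (0 : ℝ) ≤ k := by positivity
      have hε1 : ε ≤ 1 / 2 := by
        have : 1 * ε ≤ K * ε := mul_le_mul_of_nonneg_right (by linarith) hε0
        linarith
      have hkε : (k : ℝ) * ε ≤ 1 / 2 :=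
        (mul_le_mul_of_nonneg_right (by linarith) hε0).trans hKε
      set X : ℝ := ((j + k : ℝ) + 1) * ((l : ℝ) - d + (j + k) + 1) with hX
      have hXpos : δ * d * (δ * ((l : ℝ) + h + 2) / 2) ≤ X := by
        apply mul_le_mul (by linarith) (by linarith) (by positivity) (by linarith)
      have hXp : 0 < X := lt_of_lt_of_le (by positivity) hXpos
      have hY : (1 - ε) * X ≤ ((h : ℝ) - (j + k)) * ((d : ℝ) - (j + k)) := by
        have id1 : X - ((h : ℝ) - (j + k)) * ((d : ℝ) - (j + k)) =
          (j + k + 1) * (l + h + 2) - (h + 1) * (d + 1) := by rw [hX]; ring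
        have h1 : (j + k + 1) * ((l : ℝ) + h + 2) - (h + 1) * (d + 1) ≤ K * (l + h + 2) := by
          have := mul_le_mul_of_nonneg_right hkK hm2.le
          linarith
        have h2 : K * ((l : ℝ) + h + 2) ≤ ε * X := by
          calc K * ((l : ℝ) + h + 2) = ε * (δ * d * (δ * ((l : ℝ) + h + 2) / 2)) := by
                rw [hε]; field_simp
            _ ≤ ε * X := by gcongr
        linarith
      have hlt : j + k < d := by
        by_contra hc
        have he : j + k = d := by omega
        have he' : (d : ℝ) - (j + k) = 0 := by
          rw [← he]; push_cast; ring
        rw [he', mul_zero] at hY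
        have : 0 < (1 - ε) * X := mul_pos (by linarith) hXp
        linarith
      refine ⟨by omega, ?_⟩
      have hr := hyp_ratio l h d (j + k) hlt
      have hr' : N (j + (k + 1)) * X =
        N (j + k) * (((h : ℝ) - (j + k)) * ((d : ℝ) - (j + k))) := by
        have : N (j + k + 1) * (((j + k : ℕ) : ℝ) + 1) * ((l : ℝ) - d + ((j + k : ℕ) : ℝ) + 1) = 
          N (j + k) * (((h : ℝ) - ((j + k : ℕ) : ℝ)) * ((d : ℝ) - ((j + k : ℕ) : ℝ))) := by
            rw [mul_assoc]; exact hr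
        push_cast at this
        rw [hX, ← mul_assoc]; exact this
      have h3 : (1 - ε) * N (j + k) ≤ N (j + (k + 1)) := by
        apply le_of_mul_le_mul_right _ hXp
        rw [hr']
        have := mul_le_mul_of_nonneg_left hY (hN0 (j + k))
        linarith
      refine le_trans ?_ h3
      have h4 : (1 - ε) * ((1 - k * ε) * N j) ≤ (1 - ε) * N (j + k) :=
        mul_le_mul_of_nonneg_left i2 (by linarith)
      refine le_trans ?_ h4
      push_cast
      have : 0 ≤ k * ε * ε * N j := by positivity
      linarith
  have htot : ((K : ℝ) + 1) * (N j / 2) ≤ ((l + h).choose d : ℝ) := by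
    rw [hsum]
    calc ((K : ℝ) + 1) * (N j / 2) = ∑ k ∈ range (K + 1), N j / 2 := by simp
      _ ≤ ∑ k ∈ range (K + 1), N (j + k) := by
          apply sum_le_sum
          intro k hk
          have hk' : k ≤ K := by simpa [Nat.lt_succ_iff] using hk
          have hkR : (k : ℝ) ≤ K := by exact_mod_cast hk'
          have := (step k hk').2
          have : (k : ℝ) * ε ≤ 1 / 2 := (mul_le_mul_of_nonneg_right hkR hε0).trans hKε
          have : (1 / 2) * N j ≤ (1 - k * ε) * N j :=
            mul_le_mul_of_nonneg_right (by linarith) hpos.le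
          linarith
      _ = ∑ i ∈ (range (K + 1)).map (addLeftEmbedding j), N i := by simp
      _ ≤ ∑ i ∈ range (d + 1), N i := by
          apply sum_le_sum_of_subset_of_nonneg
          · intro i hi
            simp only [mem_map, mem_range, addLeftEmbedding_apply] at hi ⊢
            obtain ⟨k, hk, rfl⟩ := hi
            have := (step k (by omega)).1
            omega
          · intro i _ _; exact hN0 i
  have hfin : (δ * Real.sqrt d / 2) * (N j / 2) ≤ ((l + h).choose d : ℝ) := by
    refine le_trans ?_ htot
    gcongr
  rw [div_mul_eq_mul_div, le_div_iff₀ (by positivity)]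
  linarith

/-- Threshold splitting of a set on which no level set is too large. -/
lemma exists_split {α : Type*} (E : Finset α) (hE : E.Nonempty) (v : α → ℝ) (δ : ℝ)
    (hδ1 : δ ≤ 1)
    (hlev : ∀ a, ((E.filter fun i => v i = a).card : ℝ) < (1 - 2 * δ) * E.card + 0) :
    ∃ t, δ * E.card ≤ (E.filter fun i => v i ≤ t).card ∧
      δ * E.card ≤ (E.filter fun i => ¬ v i ≤ t).card := by
  set S := (E.image v).filter fun t => δ * E.card ≤ ((E.filter fun i => v i ≤ t).card : ℝ) with hS
  have hSne : S.Nonempty := by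
    obtain ⟨m, hm, hmax⟩ := exists_max_image E v hE
    refine ⟨v m, ?_⟩
    rw [hS, mem_filter]
    refine ⟨mem_image_of_mem _ hm, ?_⟩
    rw [filter_true_of_mem hmax]
    exact mul_le_of_le_one_left (by positivity) hδ1
  obtain ⟨t, htS, htmin⟩ := exists_min_image S id hSne
  have ht := (mem_filter.1 htS).2
  refine ⟨t, ht, ?_⟩
  by_contra hgt
  rw [not_le] at hgt
  have hlt : ((E.filter fun i => v i < t).card : ℝ) ≤ δ * E.card := by
    by_contra hc
    push Not at hc
    have hne : (E.filter fun i => v i < t).Nonempty := by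
      by_contra hemp
      rw [not_nonempty_iff_eq_empty] at hemp
      rw [hemp, card_empty] at hc
      have hE0 : (0 : ℝ) ≤ E.card := by positivity
      have : (0 : ℝ) ≤ ((E.filter fun i => ¬ v i ≤ t).card : ℝ) := by positivity
      push_cast at hc
      linarith
    obtain ⟨m, hm, hmax⟩ := exists_max_image _ v hne
    rw [mem_filter] at hm
    have : v m ∈ S := by
      rw [hS, mem_filter]
      refine ⟨mem_image_of_mem _ hm.1, hc.le.trans ?_⟩
      norm_cast
      apply card_le_card
      intro i hi
      exact mem_filter.2 ⟨(mem_filter.1 hi).1, hmax i hi⟩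
    have := htmin _ this
    simp only [id] at this
    linarith [hm.2]
  have h1 := hlev t
  have hc : (E.filter fun i => v i < t).card + (E.filter fun i => v i = t).card =
      (E.filter fun i => v i ≤ t).card := by
    rw [← card_union_of_disjoint]
    · congr 1
      ext p
      simp only [mem_filter, mem_union, le_iff_lt_or_eq]
      tauto
    · rw [disjoint_filter]
      intro p _ h1 h2
      exact absurd h2 h1.ne
  have hc2 := card_filter_add_card_filter_not (s := E) (fun i => v i ≤ t)
  have hcR : ((E.filter fun i => v i < t).card : ℝ) + (E.filter fun i => v i = t).card =
      (E.filter fun i => v i ≤ t).card := by exact_mod_cast hc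
  have hc2R : ((E.filter fun i => v i ≤ t).card : ℝ) + (E.filter fun i => ¬ v i ≤ t).card =
      E.card := by exact_mod_cast hc2
  linarith

/-- Appending a random sparse 0/1 column to a matrix whose transpose has an
`η`-balanced kernel vector increases the rank, with probability `1 − O_η(1/√d)`. -/
theorem corank_boosting_bipartite (η : ℝ) (hη₁ : 0 < η) (hη₂ : η < 1 / 2) :
    ∃ C : ℝ, 0 < C ∧
      ∀ (n₁ n₂ : ℕ) (B : Matrix (Fin n₁) (Fin n₂) ℝ) (E : Finset (Fin n₁)) (d : ℕ)
        (z : Fin n₁ → ℝ),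
        (n₁ : ℝ) * (1 - η / 3) ≤ (E.card : ℝ) →
        1 ≤ d → 2 * d ≤ E.card →
        (∀ i ∉ E, z i = 0 ∨ z i = 1) →
        (∃ v : Fin n₁ → ℝ, B.transpose.mulVec v = 0 ∧ IsBalancedVec η v) →
        (1 - C / Real.sqrt d) * ((Finset.powersetCard d E).card : ℝ) ≤
          (((Finset.powersetCard d E).filter fun T =>
            B.rank + 1 ≤ (appendCol B (xVec E T z)).rank).card : ℝ) := by
  refine ⟨12 / η, by positivity, ?_⟩
  rintro n₁ n₂ B E d z hE hd hdE - ⟨v, hv, hbal⟩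
  have hEpos : 0 < E.card := by omega
  have hEn : (E.card : ℝ) ≤ n₁ := by
    exact_mod_cast (card_le_univ E).trans (by simp)
  have hn : (0 : ℝ) < n₁ := lt_of_lt_of_le (by exact_mod_cast hEpos) hEn
  obtain ⟨t, hL, hH⟩ := exists_split E (card_pos.1 hEpos) v (η / 3) (by linarith) (by
    intro a
    have h1 := hbal a
    have h2 : ((E.filter fun i => v i = a).card : ℝ) ≤ ({i | v i = a} : Set (Fin n₁)).ncard := by
      norm_cast
      rw [← Set.ncard_coe_finset]
      apply Set.ncard_le_ncard _ (Set.toFinite _)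
      intro i hi
      simp only [coe_filter, Set.mem_ofPred_eq] at hi ⊢
      exact hi.2
    have h3 : (1 - 2 * (η / 3)) * (n₁ * (1 - η / 3)) ≤ (1 - 2 * (η / 3)) * E.card :=
      mul_le_mul_of_nonneg_left hE (by linarith)
    have h4 : 0 < η * η * n₁ := by positivity
    nlinarith)
  set L := E.filter fun i => v i ≤ t with hLdef
  set H := E.filter fun i => ¬ v i ≤ t with hHdef
  have hLHE : L ∪ H = E := filter_union_filter_not_eq _ _
  have hdis : Disjoint L H := disjoint_filter_filter_not _ _ _
  have hcard : L.card + H.card = E.card := by rw [← card_union_of_disjoint hdis, hLHE]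
  have hcardR : (L.card : ℝ) + H.card = E.card := by exact_mod_cast hcard
  set s : ℝ := - ∑ i ∈ univ \ E, v i * z i with hs
  have hmax := hyp_max (η / 3) (by positivity) (by linarith) L.card H.card d hd (by omega)
    (by rw [hcardR]; exact hL) (by rw [hcardR]; exact hH)
  have hcount := count_le E L H (fun i => by rw [← hLHE, mem_union]) hdis v (by
    intro x hx y hy
    have h1 := (mem_filter.1 hx).2
    have h2 := (mem_filter.1 hy).2
    push Not at h2
    linarith) s d (by omega) _ (by positivity) hmax
  rw [hcard] at hcount
  have hsub : (powersetCard d E).filter (fun T => ¬ ∑ i ∈ T, v i = s) ⊆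
      (powersetCard d E).filter fun T => B.rank + 1 ≤ (appendCol B (xVec E T z)).rank := by
    intro T hT
    rw [mem_filter] at hT ⊢
    refine ⟨hT.1, rank_appendCol_of_dot_ne B _ v hv fun h0 => hT.2 ?_⟩
    have hTE := (mem_powersetCard.1 hT.1).1
    rw [← sum_sdiff (subset_univ E), ← sum_sdiff hTE] at h0
    have e1 : ∑ i ∈ univ \ E, v i * xVec E T z i = ∑ i ∈ univ \ E, v i * z i := by
      apply sum_congr rfl
      intro i hi
      have hi' : i ∉ E := (mem_sdiff.1 hi).2
      have hiT : i ∉ T := fun h => hi' (hTE h)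
      simp [xVec, hi', hiT]
    have e2 : ∑ i ∈ E \ T, v i * xVec E T z i = 0 := by
      apply sum_eq_zero
      intro i hi
      have hi' := mem_sdiff.1 hi
      simp [xVec, hi'.1, hi'.2]
    have e3 : ∑ i ∈ T, v i * xVec E T z i = ∑ i ∈ T, v i := by
      apply sum_congr rfl
      intro i hi
      simp [xVec, hi]
    rw [e1, e2, e3] at h0
    linarith
  have hle := card_le_card hsub
  have hleR : (((powersetCard d E).filter (fun T => ¬ ∑ i ∈ T, v i = s)).card : ℝ) ≤
      ((powersetCard d E).filter fun T =>
        B.rank + 1 ≤ (appendCol B (xVec E T z)).rank).card := by exact_mod_cast hle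
  refine le_trans ?_ hleR
  have hc2 := card_filter_add_card_filter_not (s := powersetCard d E) (fun T => ∑ i ∈ T, v i = s)
  have hc2R : (((powersetCard d E).filter (fun T => ∑ i ∈ T, v i = s)).card : ℝ) +
    ((powersetCard d E).filter (fun T => ¬ ∑ i ∈ T, v i = s)).card = (powersetCard d E).card := by
    exact_mod_cast hc2
  have hC : 4 / (η / 3 * Real.sqrt d) = 12 / η / Real.sqrt d := by
    have : 0 < Real.sqrt d := Real.sqrt_pos.2 (by exact_mod_cast hd)
    field_simp
    norm_num
  rw [hC, ← card_powersetCard] at hcount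
  linarith
end

section
/- Fix 0 < η < 1/2. There exists a constant C = C(η) > 0 such that the following holds. Let A ∈ ℝ^{n×n} be symmetric, let E ⊆ {1,…,n} with |E| ≥ n(1 − η/3), let d be an integer with 1 ≤ d ≤ |E|/2, and fix a 0/1 vector z indexed by {1,…,n}∖E. Let x ∈ {0,1}^n be random, with its restriction to E uniformly distributed over 0/1 vectors with exactly d ones, and its restriction to the complement of E equal to z. Let A′ be the symmetric (n+1)×(n+1) matrix obtained from A by appending x as a new row and column with 0 as the new diagonal entry. If A has a kernel vector which is η-balanced, then Pr[rank A′ = rank A + 2] ≥ 1 − C/√d. -/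
open scoped Classical
open Finset

/-- The symmetric matrix obtained from `A` by appending `x` as a new row and column,
with `0` as the new diagonal entry. -/
noncomputable def appendRowCol {n : ℕ} (A : Matrix (Fin n) (Fin n) ℝ)
    (x : Fin n → ℝ) : Matrix (Option (Fin n)) (Option (Fin n)) ℝ :=
  Matrix.of fun i j =>
    match i, j with
    | some a, some b => A a b
    | some a, none => x a
    | none, some b => x b
    | none, none => 0

lemma rank_add_two {n : ℕ} (A : Matrix (Fin n) (Fin n) ℝ) (x v : Fin n → ℝ) (hA : A.IsSymm)
    (hv : A.mulVec v = 0) (hx : x ⬝ᵥ v ≠ 0) : (appendRowCol A x).rank = A.rank + 2 := by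
  let K := LinearMap.ker A.mulVecLin
  let φ : K →ₗ[ℝ] ℝ := (dotProductBilin ℝ ℝ x).comp K.subtype
  let L : (Fin n → ℝ) →ₗ[ℝ] (Option (Fin n) → ℝ) :=
    { toFun := fun y o => o.elim 0 y
      map_add' := by intro y z; ext o; cases o <;> simp
      map_smul' := by intro c y; ext o; cases o <;> simp }
  have hL : Function.Injective (L.comp K.subtype) := by
    intro y z h
    apply Subtype.ext
    funext i
    exact congrFun h (some i)
  have hφ : LinearMap.range φ = ⊤ := by
    apply LinearMap.range_eq_top.2
    apply LinearMap.surjective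
    intro h
    apply hx
    have := LinearMap.congr_fun h ⟨v, by simpa [K] using hv⟩
    simpa [φ] using this
  have hmul : ∀ y : Option (Fin n) → ℝ, (appendRowCol A x).mulVec y = 0 ↔
      (∀ i, A.mulVec (fun j => y (some j)) i + x i * y none = 0) ∧
        x ⬝ᵥ (fun j => y (some j)) = 0 := by
    intro y
    rw [funext_iff, Option.forall]
    simp only [Matrix.mulVec, dotProduct, Fintype.sum_option, appendRowCol, Matrix.of_apply,
      Pi.zero_apply, zero_mul, zero_add]
    rw [and_comm]
    simp only [add_comm]
  have hker : (LinearMap.ker φ).map (L.comp K.subtype) =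
      LinearMap.ker (appendRowCol A x).mulVecLin := by
    ext y
    simp only [Submodule.mem_map, LinearMap.mem_ker, Matrix.mulVecLin_apply, hmul]
    constructor
    · rintro ⟨⟨w, hw⟩, h1, rfl⟩
      have hw' : A.mulVec w = 0 := by simpa [K] using hw
      have h1' : x ⬝ᵥ w = 0 := by simpa [φ] using h1
      refine ⟨fun i => ?_, ?_⟩
      · have := congrFun hw' i
        simpa [L] using this
      · simpa [L] using h1'
    · rintro ⟨h1, h2⟩
      have ht : y none = 0 := by
        have e : A.mulVec (fun j => y (some j)) = fun i => - (y none * x i) := by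
          funext i; linarith [h1 i]
        have e2 : v ⬝ᵥ A.mulVec (fun j => y (some j)) = 0 := by
          rw [Matrix.dotProduct_mulVec, ← Matrix.mulVec_transpose, hA.eq, hv, zero_dotProduct]
        rw [e] at e2
        have e3 : y none * (x ⬝ᵥ v) = 0 := by
          rw [← neg_eq_zero, ← e2]
          simp only [dotProduct, Finset.mul_sum, ← Finset.sum_neg_distrib]
          refine Finset.sum_congr rfl fun i _ => by ring
        exact (mul_eq_zero.1 e3).resolve_right hx
      have hK : A.mulVec (fun j => y (some j)) = 0 := by
        funext i
        have := h1 i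
        rw [ht] at this
        simpa using this
      refine ⟨⟨fun j => y (some j), by simpa [K] using hK⟩, by simpa [φ] using h2, ?_⟩
      funext o
      cases o
      · simp [L, ht]
      · simp [L]
  have f1 := LinearMap.finrank_range_add_finrank_ker φ
  have f2 := LinearMap.finrank_range_add_finrank_ker A.mulVecLin
  have f3 := LinearMap.finrank_range_add_finrank_ker (appendRowCol A x).mulVecLin
  have f4 := (Submodule.equivMapOfInjective _ hL (LinearMap.ker φ)).finrank_eq
  rw [hker] at f4
  rw [hφ] at f1
  simp only [finrank_top, Module.finrank_self, Module.finrank_fintype_fun_eq_card,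
    Fintype.card_option, Fintype.card_fin] at f1 f2 f3
  unfold Matrix.rank
  change _ = Module.finrank ℝ K at f1
  change _ + Module.finrank ℝ K = _ at f2
  omega

lemma centralBinom_sq (m : ℕ) : (Nat.centralBinom m : ℝ) ^ 2 * (2 * m + 1) ≤ (4 ^ m) ^ 2 := by
  induction m with
  | zero => simp
  | succ m ih =>
    have h : ((m : ℝ) + 1) * Nat.centralBinom (m + 1) = 2 * (2 * m + 1) * Nat.centralBinom m := by
      exact_mod_cast Nat.succ_mul_centralBinom_succ m
    have hm : (0 : ℝ) ≤ m := Nat.cast_nonneg m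
    have hpos : (0 : ℝ) < ((m : ℝ) + 1) ^ 2 := by positivity
    have e : (((m : ℝ) + 1) * Nat.centralBinom (m + 1)) ^ 2 * (2 * m + 3) =
        (4 * (2 * m + 1) * (2 * m + 3)) * ((Nat.centralBinom m : ℝ) ^ 2 * (2 * m + 1)) := by
      rw [h]; ring
    have e2 : (4 * (2 * (m : ℝ) + 1) * (2 * m + 3)) * ((Nat.centralBinom m : ℝ) ^ 2 * (2 * m + 1))
        ≤ (16 * (m + 1) ^ 2) * (4 ^ m) ^ 2 := by
      apply mul_le_mul _ ih (by positivity) (by positivity)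
      nlinarith
    push_cast
    rw [← mul_le_mul_iff_right₀ hpos]
    calc _ = (((m : ℝ) + 1) * Nat.centralBinom (m + 1)) ^ 2 * (2 * m + 3) := by ring
      _ ≤ _ := by rw [e]; refine e2.trans (le_of_eq ?_); ring

lemma choose_half_le (N : ℕ) :
    ((N.choose (N / 2) : ℕ) : ℝ) ≤ 2 ^ N / Real.sqrt (N + 1) := by
  have key : ((N.choose (N / 2) : ℕ) : ℝ) ^ 2 * (N + 1) ≤ (2 ^ N) ^ 2 := by
    rcases Nat.even_or_odd' N with ⟨m, rfl | rfl⟩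
    · have := centralBinom_sq m
      rw [Nat.centralBinom] at this
      rw [Nat.mul_div_cancel_left _ (by norm_num), pow_mul]
      push_cast
      norm_num at this ⊢
      exact this
    · have h := centralBinom_sq (m + 1)
      have e : Nat.centralBinom (m + 1) = 2 * (2 * m + 1).choose m := by
        rw [Nat.centralBinom_eq_two_mul_choose, show 2 * (m + 1) = 2 * m + 1 + 1 by ring,
          Nat.choose_succ_succ, Nat.choose_symm_half]
        ring
      rw [e] at h
      have e2 : (2 * m + 1) / 2 = m := by omega
      rw [e2]
      push_cast at h ⊢
      have e3 : ((4 : ℝ) ^ (m + 1)) ^ 2 = 4 * (2 ^ (2 * m + 1)) ^ 2 := by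
        rw [pow_succ (4 : ℝ) m, pow_succ (2 : ℝ) (2 * m), pow_mul]; norm_num; ring
      rw [e3] at h
      have : (0 : ℝ) ≤ ((2 * m + 1).choose m : ℝ) ^ 2 := by positivity
      nlinarith
  have hs : 0 < Real.sqrt ((N : ℝ) + 1) := Real.sqrt_pos.2 (by positivity)
  rw [le_div_iff₀ hs]
  apply le_of_sq_le_sq _ (by positivity)
  rw [mul_pow, Real.sq_sqrt (by positivity)]
  exact key

lemma lo_type {α : Type*} [Fintype α] [DecidableEq α] (w : α → ℝ) (hw : ∀ i, w i ≠ 0) (c : ℝ) :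
    ((Finset.univ : Finset (Finset α)).filter fun S => ∑ i ∈ S, w i = c).card ≤
      (Fintype.card α).choose (Fintype.card α / 2) := by
  let P : Finset α := Finset.univ.filter fun i => w i < 0
  have hinj : Function.Injective (fun S : Finset α => symmDiff S P) :=
    fun S T h => symmDiff_left_injective P h
  rw [← Finset.card_image_of_injective _ hinj]
  apply IsAntichain.sperner
  intro X hX Y hY hne hsub
  simp only [Finset.coe_image, Set.mem_image, Finset.mem_coe, Finset.mem_filter,
    Finset.mem_univ, true_and] at hX hY
  obtain ⟨S, hS, rfl⟩ := hX
  obtain ⟨T, hT, rfl⟩ := hY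
  have hsub' : symmDiff S P ⊆ symmDiff T P := hsub
  have hI : ∀ U : Finset α, ∑ i ∈ symmDiff U P, |w i| = ∑ i ∈ U, w i - ∑ i ∈ P, w i := by
    intro U
    rw [← Finset.sum_filter_add_sum_filter_not U (fun i => w i < 0),
      ← Finset.sum_filter_add_sum_filter_not P (fun i => i ∈ U),
      ← Finset.sum_filter_add_sum_filter_not (symmDiff U P) (fun i => i ∈ U)]
    have a1 : (symmDiff U P).filter (fun i => i ∈ U) = U.filter (fun i => ¬ w i < 0) := by
      ext i; simp [Finset.mem_symmDiff, P]; tauto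
    have a2 : (symmDiff U P).filter (fun i => ¬ i ∈ U) = P.filter (fun i => ¬ i ∈ U) := by
      ext i; simp [Finset.mem_symmDiff, P]; tauto
    have a3 : P.filter (fun i => i ∈ U) = U.filter (fun i => w i < 0) := by
      ext i; simp [P]; tauto
    rw [a1, a2, a3]
    have b1 : ∑ i ∈ U.filter (fun i => ¬ w i < 0), |w i| =
        ∑ i ∈ U.filter (fun i => ¬ w i < 0), w i :=
      Finset.sum_congr rfl fun i hi => abs_of_nonneg (not_lt.1 (Finset.mem_filter.1 hi).2)
    have b2 : ∑ i ∈ P.filter (fun i => ¬ i ∈ U), |w i| =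
        - ∑ i ∈ P.filter (fun i => ¬ i ∈ U), w i := by
      rw [← Finset.sum_neg_distrib]
      refine Finset.sum_congr rfl fun i hi => abs_of_neg ?_
      simpa [P] using (Finset.mem_filter.1 (Finset.mem_filter.1 hi).1).2
    rw [b1, b2]; ring
  have hlt : ∑ i ∈ symmDiff S P, |w i| < ∑ i ∈ symmDiff T P, |w i| := by
    obtain ⟨i, hi, hi'⟩ := Finset.exists_of_ssubset (hsub'.ssubset_of_ne hne)
    exact Finset.sum_lt_sum_of_subset hsub' hi hi' (abs_pos.2 (hw i)) fun _ _ _ => abs_nonneg _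
  rw [hI, hI, hS, hT] at hlt
  exact lt_irrefl _ hlt

lemma lo_finset {α : Type*} [DecidableEq α] (J : Finset α) (w : α → ℝ)
    (hw : ∀ i ∈ J, w i ≠ 0) (c : ℝ) :
    (J.powerset.filter fun S => ∑ i ∈ S, w i = c).card ≤ J.card.choose (J.card / 2) := by
  have h := lo_type (fun i : J => w i) (fun i => hw i i.2) c
  rw [Fintype.card_coe] at h
  refine le_trans ?_ h
  refine Finset.card_le_card_of_injOn (fun S => S.subtype (· ∈ J)) ?_ ?_
  · intro S hS
    simp only [Finset.coe_filter, Finset.mem_powerset, Set.mem_ofPred_eq, Finset.mem_univ,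
      true_and] at hS ⊢
    rw [← hS.2, Finset.sum_subtype_of_mem (f := w) hS.1]
  · intro S hS T hT hST
    simp only [Finset.coe_filter, Finset.mem_powerset, Set.mem_ofPred_eq] at hS hT
    have e := congrArg (fun U => U.map (Function.Embedding.subtype (· ∈ J))) hST
    simp only [Finset.subtype_map_of_mem hS.1, Finset.subtype_map_of_mem hT.1] at e
    exact e

lemma lo_general {α : Type*} [DecidableEq α] (A : Finset α) (w : α → ℝ) (c : ℝ) :
    ((A.powerset.filter fun S => ∑ i ∈ S, w i = c).card : ℝ) ≤
      2 ^ A.card / Real.sqrt ((A.filter fun i => w i ≠ 0).card + 1) := by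
  set J := A.filter fun i => w i ≠ 0 with hJ
  have hJA : J ⊆ A := Finset.filter_subset _ _
  have h1 : (A.powerset.filter fun S => ∑ i ∈ S, w i = c).card ≤
      ((J.powerset.filter fun S => ∑ i ∈ S, w i = c) ×ˢ (A \ J).powerset).card := by
    refine Finset.card_le_card_of_injOn (fun S => (S ∩ J, S \ J)) ?_ ?_
    · intro S hS
      simp only [Finset.coe_filter, Finset.mem_powerset, Set.mem_ofPred_eq] at hS
      simp only [Finset.coe_product, Set.mem_prod, Finset.mem_coe, Finset.mem_filter,
        Finset.mem_powerset]
      refine ⟨⟨Finset.inter_subset_right, ?_⟩, Finset.sdiff_subset_sdiff hS.1 le_rfl⟩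
      rw [← hS.2]
      apply Finset.sum_subset Finset.inter_subset_left
      intro i hi hi'
      by_contra h0
      exact hi' (Finset.mem_inter.2 ⟨hi, Finset.mem_filter.2 ⟨hS.1 hi, h0⟩⟩)
    · intro S _ T _ hST
      simp only [Prod.mk.injEq] at hST
      rw [← Finset.sdiff_union_inter S J, ← Finset.sdiff_union_inter T J, hST.1, hST.2]
  rw [Finset.card_product, Finset.card_powerset] at h1
  have h2 := lo_finset J w (fun i hi => (Finset.mem_filter.1 hi).2) c
  have h3 := choose_half_le J.card
  have h4 : (A \ J).card + J.card = A.card := Finset.card_sdiff_add_card_eq_card hJA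
  calc ((A.powerset.filter fun S => ∑ i ∈ S, w i = c).card : ℝ)
      ≤ ((J.powerset.filter fun S => ∑ i ∈ S, w i = c).card : ℝ) * 2 ^ (A \ J).card := by
        exact_mod_cast h1
    _ ≤ (2 ^ J.card / Real.sqrt (J.card + 1)) * 2 ^ (A \ J).card := by
        apply mul_le_mul_of_nonneg_right _ (by positivity)
        exact le_trans (by exact_mod_cast h2) h3
    _ = _ := by rw [← h4, pow_add]; ring

lemma exists_involution {n : ℕ} (E : Finset (Fin n)) (v : Fin n → ℝ) :
    ∃ τ : Fin n → Fin n, Function.Involutive τ ∧ (∀ i, τ i ≠ i → i ∈ E ∧ v (τ i) ≠ v i) ∧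
      ∃ c, ∀ i ∈ E, τ i = i → v i = c := by
  let Q : Finset (Fin n → Fin n) := Finset.univ.filter fun τ =>
    Function.Involutive τ ∧ ∀ i, τ i ≠ i → i ∈ E ∧ v (τ i) ≠ v i
  have hQ : Q.Nonempty := ⟨id, Finset.mem_filter.2 ⟨Finset.mem_univ _, fun _ => rfl, fun i h => absurd rfl h⟩⟩
  obtain ⟨τ, hτ, hmax⟩ := Q.exists_max_image
    (fun τ => (Finset.univ.filter fun i => τ i ≠ i).card) hQ
  simp only [Q, Finset.mem_filter, Finset.mem_univ, true_and] at hτ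
  obtain ⟨h1, h2⟩ := hτ
  refine ⟨τ, h1, h2, ?_⟩
  by_contra hc
  have hex : ∃ a ∈ E, ∃ b ∈ E, τ a = a ∧ τ b = b ∧ v a ≠ v b := by
    by_contra hno
    push Not at hno
    by_cases h0 : ∃ a ∈ E, τ a = a
    · obtain ⟨a, ha, ha'⟩ := h0
      exact hc ⟨v a, fun i hi hi' => hno i hi a ha hi' ha'⟩
    · push Not at h0
      exact hc ⟨0, fun i hi hi' => absurd hi' (h0 i hi)⟩
  obtain ⟨a, ha, b, hb, ta, tb, hab⟩ := hex
  have hne : a ≠ b := fun h => hab (by rw [h])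
  let σ : Fin n → Fin n := fun i => if i = a then b else if i = b then a else τ i
  have hσ : σ ∈ Q := by
    simp only [Q, Finset.mem_filter, Finset.mem_univ, true_and]
    constructor
    · intro i
      have hi := h1 i
      simp only [σ]
      grind
    · intro i
      have hi := h2 i
      simp only [σ]
      grind
  have hlt := hmax σ hσ
  have : (Finset.univ.filter fun i => τ i ≠ i) ⊂ (Finset.univ.filter fun i => σ i ≠ i) := by
    rw [Finset.ssubset_iff_of_subset]
    · refine ⟨a, ?_, ?_⟩
      · simp [σ, hne.symm]
      · simp [ta]
    · intro i
      simp only [Finset.mem_filter, Finset.mem_univ, true_and, σ]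
      grind
  exact absurd (Finset.card_lt_card this) (not_lt.2 hlt)

lemma flip_sum {n : ℕ} (v : Fin n → ℝ) (τ : Fin n → Fin n) (hτ : Function.Involutive τ)
    (T S : Finset (Fin n)) (hS : ∀ i ∈ S, i < τ i) :
    ∑ i ∈ T, v (if i ∈ S ∨ τ i ∈ S then τ i else i) = ∑ i ∈ T, v i +
      ∑ i ∈ S, ((if i ∈ T then 1 else 0) - (if τ i ∈ T then 1 else 0)) * (v (τ i) - v i) := by
  rw [← sub_eq_iff_eq_add', ← Finset.sum_sub_distrib]
  have e1 : ∀ i, v (if i ∈ S ∨ τ i ∈ S then τ i else i) - v i =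
      (if i ∈ S then v (τ i) - v i else 0) + (if τ i ∈ S then v (τ i) - v i else 0) := by
    intro i
    by_cases h1 : i ∈ S <;> by_cases h2 : τ i ∈ S
    · have a1 := hS _ h1
      have a2 := hS _ h2
      rw [hτ i] at a2
      exact absurd a1 (not_lt.2 a2.le)
    all_goals simp [h1, h2]
  simp only [e1]
  rw [Finset.sum_add_distrib]
  have e2 : ∑ i ∈ T, (if i ∈ S then v (τ i) - v i else 0) =
      ∑ i ∈ S, (if i ∈ T then 1 else 0) * (v (τ i) - v i) := by
    rw [← Finset.sum_filter]
    simp only [ite_mul, one_mul, zero_mul]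
    rw [← Finset.sum_filter]
    refine Finset.sum_congr ?_ fun _ _ => rfl
    ext i; simp [and_comm]
  have e3 : ∑ i ∈ T, (if τ i ∈ S then v (τ i) - v i else 0) =
      ∑ i ∈ S, (if τ i ∈ T then 1 else 0) * (v i - v (τ i)) := by
    rw [← Finset.sum_filter]
    simp only [ite_mul, one_mul, zero_mul]
    rw [← Finset.sum_filter]
    refine Finset.sum_nbij' τ τ ?_ ?_ ?_ ?_ ?_
    · intro i; simp [hτ i, and_comm]
    · intro i; simp [hτ i, and_comm]
    · intro i _; exact hτ i
    · intro i _; exact hτ i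
    · intro i _; rw [hτ i]
  rw [e2, e3, ← Finset.sum_add_distrib]
  exact Finset.sum_congr rfl fun i _ => by ring

lemma slice_bound {n : ℕ} (E : Finset (Fin n)) (v : Fin n → ℝ) (τ : Fin n → Fin n)
    (hτ : Function.Involutive τ) (hE : ∀ i, τ i ≠ i → i ∈ E ∧ v (τ i) ≠ v i) (d : ℕ) (c : ℝ) :
    (((Finset.powersetCard d E).filter fun T => ∑ i ∈ T, v i = c).card : ℝ) ≤
      ∑ T ∈ Finset.powersetCard d E, 1 / Real.sqrt
        (((Finset.univ.filter fun i => i < τ i).filter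
          fun i => ¬ (i ∈ T ↔ τ i ∈ T)).card + 1) := by
  set A : Finset (Fin n) := Finset.univ.filter fun i => i < τ i with hA
  have hAm : ∀ i ∈ A, i < τ i := fun i hi => (Finset.mem_filter.1 hi).2
  set P := Finset.powersetCard d E with hP
  let π : Finset (Fin n) → Fin n → Fin n := fun S i => if i ∈ S ∨ τ i ∈ S then τ i else i
  have hπ : ∀ S, Function.Involutive (π S) := by
    intro S i
    have := hτ i
    simp only [π]
    grind
  have hπE : ∀ S, ∀ i ∈ E, π S i ∈ E := by
    intro S i hi
    have := hτ i
    have h1 := hE (τ i)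
    simp only [π]
    grind
  have s1 : ∀ S, (P.filter fun T => ∑ i ∈ T, v i = c).card ≤
      (P.filter fun T => ∑ i ∈ T, v (π S i) = c).card := by
    intro S
    refine Finset.card_le_card_of_injOn (fun T => T.map ⟨π S, (hπ S).injective⟩) ?_ ?_
    · intro T hT
      simp only [Finset.coe_filter, hP, Finset.mem_powersetCard, Set.mem_ofPred_eq] at hT ⊢
      refine ⟨⟨?_, by rw [Finset.card_map]; exact hT.1.2⟩, ?_⟩
      · intro j hj
        obtain ⟨i, hi, rfl⟩ := Finset.mem_map.1 hj
        exact hπE S i (hT.1.1 hi)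
      · rw [Finset.sum_map, ← hT.2]
        refine Finset.sum_congr rfl fun i _ => ?_
        exact congrArg v (hπ S i)
    · intro T _ T' _ h
      exact Finset.map_injective _ h
  have s2 : (2 : ℝ) ^ A.card * ((P.filter fun T => ∑ i ∈ T, v i = c).card : ℝ) ≤
      ∑ S ∈ A.powerset, ((P.filter fun T => ∑ i ∈ T, v (π S i) = c).card : ℝ) := by
    have := Finset.sum_le_sum (s := A.powerset) fun S _ => s1 S
    rw [Finset.sum_const, Finset.card_powerset, smul_eq_mul] at this
    exact_mod_cast this
  have s3 : ∑ S ∈ A.powerset, ((P.filter fun T => ∑ i ∈ T, v (π S i) = c).card : ℝ) =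
      ∑ T ∈ P, ((A.powerset.filter fun S => ∑ i ∈ T, v (π S i) = c).card : ℝ) := by
    simp only [Finset.card_filter]
    push_cast
    exact Finset.sum_comm
  have s4 : ∀ T ∈ P, ((A.powerset.filter fun S => ∑ i ∈ T, v (π S i) = c).card : ℝ) ≤
      2 ^ A.card * (1 / Real.sqrt ((A.filter fun i => ¬ (i ∈ T ↔ τ i ∈ T)).card + 1)) := by
    intro T _
    have g := lo_general A (fun i => ((if i ∈ T then 1 else 0) - (if τ i ∈ T then 1 else 0)) *
      (v (τ i) - v i)) (c - ∑ i ∈ T, v i)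
    have a1 : (A.filter fun i => ((if i ∈ T then (1 : ℝ) else 0) -
        (if τ i ∈ T then 1 else 0)) * (v (τ i) - v i) ≠ 0) =
        A.filter fun i => ¬ (i ∈ T ↔ τ i ∈ T) := by
      apply Finset.filter_congr
      intro i hi
      have h0 : v (τ i) - v i ≠ 0 := sub_ne_zero.2 (hE i (hAm i hi).ne').2
      have h0' : v i - v (τ i) ≠ 0 := sub_ne_zero.2 (hE i (hAm i hi).ne').2.symm
      by_cases h1 : i ∈ T <;> by_cases h2 : τ i ∈ T <;> simp [h1, h2, h0, h0']
    have a2 : (A.powerset.filter fun S => ∑ i ∈ S, ((if i ∈ T then (1 : ℝ) else 0) -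
        (if τ i ∈ T then 1 else 0)) * (v (τ i) - v i) = c - ∑ i ∈ T, v i) =
        A.powerset.filter fun S => ∑ i ∈ T, v (π S i) = c := by
      apply Finset.filter_congr
      intro S hS
      rw [flip_sum v τ hτ T S fun i hi => hAm i (Finset.mem_powerset.1 hS hi)]
      exact eq_sub_iff_add_eq'
    rw [a1, a2] at g
    rw [mul_one_div]
    exact g
  have s5 := s2.trans (s3.le.trans (Finset.sum_le_sum s4))
  rw [← Finset.mul_sum] at s5
  exact le_of_mul_le_mul_left s5 (by positivity)

lemma count_slice {α : Type*} [DecidableEq α] (E X Y : Finset α) (d : ℕ) (hX : X ⊆ E) (hY : Y ⊆ E)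
    (hXY : Disjoint X Y) (hd : X.card ≤ d) :
    ((Finset.powersetCard d E).filter fun T => X ⊆ T ∧ Disjoint Y T).card =
      (E.card - (X.card + Y.card)).choose (d - X.card) := by
  rw [← Finset.card_union_of_disjoint hXY,
    ← Finset.card_sdiff_of_subset (Finset.union_subset hX hY), ← Finset.card_powersetCard]
  refine Finset.card_nbij' (fun T => T \ X) (fun T => T ∪ X) ?_ ?_ ?_ ?_
  · intro T hT
    simp only [Finset.coe_filter, Finset.mem_powersetCard, Set.mem_ofPred_eq] at hT
    obtain ⟨⟨h1, h2⟩, h3, h4⟩ := hT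
    simp only [Finset.mem_coe, Finset.mem_powersetCard]
    refine ⟨?_, by rw [Finset.card_sdiff_of_subset h3, h2]⟩
    intro i hi
    rw [Finset.mem_sdiff] at hi
    rw [Finset.mem_sdiff, Finset.mem_union]
    refine ⟨h1 hi.1, ?_⟩
    rintro (h | h)
    · exact hi.2 h
    · exact Finset.disjoint_left.1 h4 h hi.1
  · intro T hT
    simp only [Finset.mem_coe, Finset.mem_powersetCard] at hT
    obtain ⟨h1, h2⟩ := hT
    simp only [Finset.coe_filter, Finset.mem_powersetCard, Set.mem_ofPred_eq]
    have hd' : Disjoint T X := by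
      rw [Finset.disjoint_left]
      intro i hi hi'
      exact (Finset.mem_sdiff.1 (h1 hi)).2 (Finset.mem_union_left _ hi')
    refine ⟨⟨Finset.union_subset (h1.trans Finset.sdiff_subset) hX, ?_⟩,
      Finset.subset_union_right, ?_⟩
    · rw [Finset.card_union_of_disjoint hd', h2]; omega
    · rw [Finset.disjoint_union_right]
      refine ⟨?_, hXY.symm⟩
      rw [Finset.disjoint_left]
      intro i hi hi'
      exact (Finset.mem_sdiff.1 (h1 hi')).2 (Finset.mem_union_right _ hi)
  · intro T hT
    simp only [Finset.coe_filter, Finset.mem_powersetCard, Set.mem_ofPred_eq] at hT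
    exact Finset.sdiff_union_of_subset hT.2.1
  · intro T hT
    simp only [Finset.mem_coe, Finset.mem_powersetCard] at hT
    have hd' : Disjoint T X := by
      rw [Finset.disjoint_left]
      intro i hi hi'
      exact (Finset.mem_sdiff.1 (hT.1 hi)).2 (Finset.mem_union_left _ hi')
    exact Finset.union_sdiff_cancel_right hd'

lemma count_one {n : ℕ} (E : Finset (Fin n)) (d : ℕ) (hd : 1 ≤ d) (a b : Fin n)
    (ha : a ∈ E) (hb : b ∈ E) (hab : a ≠ b) :
    ((Finset.powersetCard d E).filter fun T => ¬ (a ∈ T ↔ b ∈ T)).card =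
      2 * (E.card - 2).choose (d - 1) := by
  have e : ((Finset.powersetCard d E).filter fun T => ¬ (a ∈ T ↔ b ∈ T)) =
      ((Finset.powersetCard d E).filter fun T => {a} ⊆ T ∧ Disjoint {b} T) ∪
      ((Finset.powersetCard d E).filter fun T => {b} ⊆ T ∧ Disjoint {a} T) := by
    rw [← Finset.filter_or]
    apply Finset.filter_congr
    intro T _
    simp only [Finset.singleton_subset_iff, Finset.disjoint_singleton_left]
    tauto
  rw [e, Finset.card_union_of_disjoint, count_slice, count_slice]
  · simp only [Finset.card_singleton]; ring
  · simpa using hb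
  · simpa using ha
  · simpa using hab.symm
  · simpa using hd
  · simpa using ha
  · simpa using hb
  · simpa using hab
  · simpa using hd
  · rw [Finset.disjoint_filter]
    intro T _ h1 h2
    rw [Finset.singleton_subset_iff, Finset.disjoint_singleton_left] at h1 h2
    exact h1.2 h2.1

lemma count_two {n : ℕ} (E : Finset (Fin n)) (d : ℕ) (hd : 2 ≤ d) (a b p q : Fin n)
    (ha : a ∈ E) (hb : b ∈ E) (hp : p ∈ E) (hq : q ∈ E) (hab : a ≠ b) (hap : a ≠ p) (haq : a ≠ q)
    (hbp : b ≠ p) (hbq : b ≠ q) (hpq : p ≠ q) :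
    ((Finset.powersetCard d E).filter fun T => ¬ (a ∈ T ↔ b ∈ T) ∧ ¬ (p ∈ T ↔ q ∈ T)).card ≤
      4 * (E.card - 4).choose (d - 2) := by
  have e : ((Finset.powersetCard d E).filter fun T => ¬ (a ∈ T ↔ b ∈ T) ∧ ¬ (p ∈ T ↔ q ∈ T)) =
      (((Finset.powersetCard d E).filter fun T => {a, p} ⊆ T ∧ Disjoint {b, q} T) ∪
      ((Finset.powersetCard d E).filter fun T => {a, q} ⊆ T ∧ Disjoint {b, p} T)) ∪
      (((Finset.powersetCard d E).filter fun T => {b, p} ⊆ T ∧ Disjoint {a, q} T) ∪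
      ((Finset.powersetCard d E).filter fun T => {b, q} ⊆ T ∧ Disjoint {a, p} T)) := by
    rw [← Finset.filter_or, ← Finset.filter_or, ← Finset.filter_or]
    apply Finset.filter_congr
    intro T _
    simp only [Finset.insert_subset_iff, Finset.singleton_subset_iff,
      Finset.disjoint_insert_left, Finset.disjoint_singleton_left]
    by_cases h1 : a ∈ T <;> by_cases h2 : b ∈ T <;> by_cases h3 : p ∈ T <;>
      by_cases h4 : q ∈ T <;> simp [h1, h2, h3, h4]
  have key : ∀ x y s t : Fin n, x ∈ E → y ∈ E → s ∈ E → t ∈ E → x ≠ y → s ≠ t → x ≠ s → x ≠ t →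
      y ≠ s → y ≠ t → ((Finset.powersetCard d E).filter fun T =>
        {x, y} ⊆ T ∧ Disjoint {s, t} T).card = (E.card - 4).choose (d - 2) := by
    intro x y s t hx hy hs ht hxy hst hxs hxt hys hyt
    rw [count_slice]
    · rw [Finset.card_pair hxy, Finset.card_pair hst]
    · simp [Finset.insert_subset_iff, hx, hy]
    · simp [Finset.insert_subset_iff, hs, ht]
    · simp [hxs.symm, hxt.symm, hys.symm, hyt.symm]
    · rw [Finset.card_pair hxy]; exact hd
  rw [e]
  refine (Finset.card_union_le _ _).trans ?_
  refine (Nat.add_le_add (Finset.card_union_le _ _) (Finset.card_union_le _ _)).trans ?_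
  rw [key a p b q, key a q b p, key b p a q, key b q a p]
  · omega
  all_goals first | assumption | exact Ne.symm (by assumption)

lemma choose_step (q r : ℕ) : (q + r + 2).choose (q + 1) * ((q + 1) * (r + 1)) =
    (q + r + 2) * (q + r + 1) * (q + r).choose q := by
  have h1 := Nat.add_one_mul_choose_eq (q + r + 1) q
  have h2 := Nat.choose_mul_succ_eq (q + r) q
  have e : q + r + 1 - q = r + 1 := by omega
  rw [e] at h2
  calc _ = ((q + r + 1 + 1).choose (q + 1) * (q + 1)) * (r + 1) := by ring
    _ = (q + r + 2) * ((q + r + 1).choose q * (r + 1)) := by rw [← h1]; ring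
    _ = _ := by rw [← h2]; ring

lemma cheb {β : Type*} (P : Finset β) (N : β → ℕ) (μ ε : ℝ) (hμ : 0 < μ)
    (h1 : ∑ T ∈ P, (N T : ℝ) = μ * P.card)
    (h2 : ∑ T ∈ P, (N T : ℝ) ^ 2 ≤ (μ + μ ^ 2 * (1 + ε)) * P.card) :
    ∑ T ∈ P, 1 / Real.sqrt ((N T : ℝ) + 1) ≤ (Real.sqrt (2 / μ) + 4 / μ + 4 * ε) * P.card := by
  have hp : ∀ T ∈ P, 1 / Real.sqrt ((N T : ℝ) + 1) ≤
      Real.sqrt (2 / μ) + 4 / μ ^ 2 * ((N T : ℝ) ^ 2 - 2 * μ * N T + μ ^ 2) := by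
    intro T _
    have hN : (0 : ℝ) ≤ N T := Nat.cast_nonneg _
    have hsq : (N T : ℝ) ^ 2 - 2 * μ * N T + μ ^ 2 = (N T - μ) ^ 2 := by ring
    rw [hsq]
    by_cases h : μ / 2 ≤ N T + 1
    · have : 1 / Real.sqrt ((N T : ℝ) + 1) ≤ Real.sqrt (2 / μ) := by
        rw [show 2 / μ = 1 / (μ / 2) by field_simp, Real.sqrt_div zero_le_one, Real.sqrt_one]
        apply one_div_le_one_div_of_le (Real.sqrt_pos.2 (by positivity)) (Real.sqrt_le_sqrt h)
      have : 0 ≤ 4 / μ ^ 2 * ((N T : ℝ) - μ) ^ 2 := by positivity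
      linarith
    · push Not at h
      have a : 1 / Real.sqrt ((N T : ℝ) + 1) ≤ 1 := by
        rw [div_le_one (Real.sqrt_pos.2 (by positivity))]
        exact Real.one_le_sqrt.2 (by linarith)
      have b : 1 ≤ 4 / μ ^ 2 * ((N T : ℝ) - μ) ^ 2 := by
        rw [div_mul_eq_mul_div, le_div_iff₀ (by positivity)]
        nlinarith
      have := Real.sqrt_nonneg (2 / μ)
      linarith
  refine (Finset.sum_le_sum hp).trans ?_
  rw [Finset.sum_add_distrib, ← Finset.mul_sum, Finset.sum_add_distrib, Finset.sum_sub_distrib,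
    ← Finset.mul_sum, h1]
  simp only [Finset.sum_const, nsmul_eq_mul]
  have h3 : ∑ T ∈ P, (N T : ℝ) ^ 2 - 2 * μ * (μ * P.card) + P.card * μ ^ 2 ≤
      (μ + μ ^ 2 * ε) * P.card := by nlinarith
  have h4 := mul_le_mul_of_nonneg_left h3 (by positivity : 0 ≤ 4 / μ ^ 2)
  have h5 : 4 / μ ^ 2 * ((μ + μ ^ 2 * ε) * P.card) = (4 / μ + 4 * ε) * P.card := by
    field_simp
  rw [h5] at h4
  linarith

lemma moments {n : ℕ} (E : Finset (Fin n)) (τ : Fin n → Fin n)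
    (hτ : Function.Involutive τ) (hE : ∀ i, τ i ≠ i → i ∈ E) (d : ℕ) (hd : 2 ≤ d)
    (A : Finset (Fin n)) (hA : ∀ i ∈ A, i < τ i) :
    ∑ T ∈ Finset.powersetCard d E, (A.filter fun i => ¬ (i ∈ T ↔ τ i ∈ T)).card =
      A.card * (2 * (E.card - 2).choose (d - 1)) ∧
    ∑ T ∈ Finset.powersetCard d E, (A.filter fun i => ¬ (i ∈ T ↔ τ i ∈ T)).card ^ 2 ≤
      A.card * (2 * (E.card - 2).choose (d - 1)) +
        A.card ^ 2 * (4 * (E.card - 4).choose (d - 2)) := by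
  have m1 : ∀ i ∈ A, i ∈ E := fun i hi => hE i (hA i hi).ne'
  have m2 : ∀ i ∈ A, τ i ∈ E := fun i hi => hE (τ i) (by rw [hτ i]; exact (hA i hi).ne)
  have c1 : ∀ i ∈ A, ((Finset.powersetCard d E).filter fun T => ¬ (i ∈ T ↔ τ i ∈ T)).card =
      2 * (E.card - 2).choose (d - 1) := fun i hi =>
    count_one E d (by omega) i (τ i) (m1 i hi) (m2 i hi) (hA i hi).ne
  constructor
  · simp only [Finset.card_filter]
    rw [Finset.sum_comm]
    simp only [← Finset.card_filter]
    rw [Finset.sum_congr rfl c1, Finset.sum_const, smul_eq_mul]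
  · have e : ∑ T ∈ Finset.powersetCard d E, (A.filter fun i => ¬ (i ∈ T ↔ τ i ∈ T)).card ^ 2 =
        ∑ i ∈ A, ∑ j ∈ A, ((Finset.powersetCard d E).filter fun T =>
          ¬ (i ∈ T ↔ τ i ∈ T) ∧ ¬ (j ∈ T ↔ τ j ∈ T)).card := by
      simp only [Finset.card_filter, sq, Finset.sum_mul_sum]
      rw [Finset.sum_comm]
      refine Finset.sum_congr rfl fun i _ => ?_
      rw [Finset.sum_comm]
      refine Finset.sum_congr rfl fun j _ => ?_
      refine Finset.sum_congr rfl fun T _ => ?_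
      rw [ite_and]
      split_ifs <;> rfl
    rw [e]
    have step : ∀ i ∈ A, ∑ j ∈ A, ((Finset.powersetCard d E).filter fun T =>
          ¬ (i ∈ T ↔ τ i ∈ T) ∧ ¬ (j ∈ T ↔ τ j ∈ T)).card ≤
        2 * (E.card - 2).choose (d - 1) + A.card * (4 * (E.card - 4).choose (d - 2)) := by
      intro i hi
      rw [← Finset.add_sum_erase A _ hi]
      apply Nat.add_le_add
      · simp only [and_self]
        exact (c1 i hi).le
      · have : ∀ j ∈ A.erase i, ((Finset.powersetCard d E).filter fun T =>
          ¬ (i ∈ T ↔ τ i ∈ T) ∧ ¬ (j ∈ T ↔ τ j ∈ T)).card ≤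
            4 * (E.card - 4).choose (d - 2) := by
          intro j hj
          obtain ⟨hji, hj⟩ := Finset.mem_erase.1 hj
          have hi' := hA i hi
          have hj' := hA j hj
          apply count_two E d hd i (τ i) j (τ j) (m1 i hi) (m2 i hi) (m1 j hj) (m2 j hj)
            hi'.ne hji.symm _ _ _ hj'.ne
          · intro h
            rw [h, hτ j] at hi'
            exact absurd hi' (not_lt.2 hj'.le)
          · intro h
            rw [← h, hτ i] at hj'
            exact absurd hj' (not_lt.2 hi'.le)
          · intro h
            exact hji (hτ.injective h.symm)
        refine (Finset.sum_le_card_nsmul _ _ _ this).trans ?_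
        rw [smul_eq_mul]
        exact Nat.mul_le_mul_right _ (Finset.card_le_card (Finset.erase_subset _ _))
    refine (Finset.sum_le_card_nsmul _ _ _ step).trans (le_of_eq ?_)
    rw [smul_eq_mul]; ring

set_option maxHeartbeats 1000000 in
lemma slice_final (η : ℝ) (hη : 0 < η) {n : ℕ} (E : Finset (Fin n)) (v : Fin n → ℝ)
    (τ : Fin n → Fin n) (hτ : Function.Involutive τ)
    (hE : ∀ i, τ i ≠ i → i ∈ E ∧ v (τ i) ≠ v i) (d : ℕ) (hd : 10 ≤ d) (hdE : 2 * d ≤ E.card)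
    (hk : η / 3 * E.card ≤ ((Finset.univ.filter fun i => i < τ i).card : ℝ)) (c : ℝ) :
    (((Finset.powersetCard d E).filter fun T => ∑ i ∈ T, v i = c).card : ℝ) ≤
      ((Real.sqrt (6 / η) + 12 / η + 20) / Real.sqrt d) * (Finset.powersetCard d E).card := by
  refine (slice_bound E v τ hτ hE d c).trans ?_
  set A : Finset (Fin n) := Finset.univ.filter fun i => i < τ i with hA
  have hAm : ∀ i ∈ A, i < τ i := fun i hi => (Finset.mem_filter.1 hi).2
  obtain ⟨M1, M2⟩ := moments E τ hτ (fun i hi => (hE i hi).1) d (by omega) A hAm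
  have hcard : (Finset.powersetCard d E).card = E.card.choose d := Finset.card_powersetCard d E
  obtain ⟨q, rfl⟩ : ∃ q, d = q + 2 := ⟨d - 2, by omega⟩
  obtain ⟨r, hr⟩ : ∃ r, E.card = q + r + 4 := ⟨E.card - q - 4, by omega⟩
  have st1 := choose_step q r
  have st2 := choose_step (q + 1) (r + 1)
  rw [show q + 1 + (r + 1) = q + r + 2 by ring] at st2
  rw [hr] at M1 M2 hcard hk hdE
  simp only [show q + r + 4 - 2 = q + r + 2 by omega, show q + 2 - 1 = q + 1 by omega,
    show q + r + 4 - 4 = q + r by omega, show q + 2 - 2 = q by omega] at M1 M2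
  simp only [show q + r + 2 + 2 = q + r + 4 by ring, show q + 1 + 1 = q + 2 by ring] at st2
  set P := Finset.powersetCard (q + 2) E
  have p2 : 0 < (q + r).choose q := Nat.choose_pos (by omega)
  have p1 : 0 < (q + r + 2).choose (q + 1) := Nat.choose_pos (by omega)
  have p0 : 0 < (q + r + 4).choose (q + 2) := Nat.choose_pos (by omega)
  generalize (q + r).choose q = c2 at *
  generalize (q + r + 2).choose (q + 1) = c1 at *
  generalize (q + r + 4).choose (q + 2) = c0 at *
  have st1' : (c1 : ℝ) * ((q + 1) * (r + 1)) = (q + r + 2) * (q + r + 1) * c2 := by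
    exact_mod_cast st1
  have st2' : (c0 : ℝ) * ((q + 2) * (r + 2)) = (q + r + 4) * (q + r + 3) * c1 := by
    have := congrArg (Nat.cast (R := ℝ)) st2
    push_cast at this
    linarith
  have hq : (8 : ℝ) ≤ q := by exact_mod_cast (by omega : 8 ≤ q)
  have hqr : (q : ℝ) ≤ r := by exact_mod_cast (by omega : q ≤ r)
  have p2' : (0 : ℝ) < c2 := by exact_mod_cast p2
  have p1' : (0 : ℝ) < c1 := by exact_mod_cast p1
  have p0' : (0 : ℝ) < c0 := by exact_mod_cast p0
  push_cast at hk
  have hmpos : (0 : ℝ) < q + r + 4 := by linarith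
  have hkpos : (0 : ℝ) < A.card := lt_of_lt_of_le (by positivity) hk
  let μ : ℝ := 2 * A.card * c1 / c0
  have hμ : 0 < μ := by positivity
  -- ratio bound
  have ratio : (c2 : ℝ) * c0 ≤ c1 ^ 2 * (1 + 8 / (q + r + 4)) := by
    have e1 : (c2 : ℝ) = c1 * ((q + 1) * (r + 1)) / ((q + r + 2) * (q + r + 1)) := by
      rw [eq_div_iff (by positivity), st1']; ring
    have e0 : (c0 : ℝ) = (q + r + 4) * (q + r + 3) * c1 / ((q + 2) * (r + 2)) := by
      rw [eq_div_iff (by positivity), st2']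
    have f1 : ((q : ℝ) + 1) * (r + 1) / ((q + 2) * (r + 2)) ≤ 1 := by
      rw [div_le_one (by positivity)]; nlinarith
    have f2 : ((q : ℝ) + r + 4) * (q + r + 3) / ((q + r + 2) * (q + r + 1)) ≤
        1 + 8 / (q + r + 4) := by
      rw [div_le_iff₀ (by positivity), show (1 : ℝ) + 8 / (q + r + 4) =
        (q + r + 12) / (q + r + 4) by field_simp; ring, div_mul_eq_mul_div,
        le_div_iff₀ hmpos]
      obtain ⟨s, hs⟩ : ∃ s : ℝ, s = q + r := ⟨_, rfl⟩
      rw [← hs]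
      have : 16 ≤ s := by linarith
      nlinarith
    calc (c2 : ℝ) * c0 = c1 ^ 2 * ((((q : ℝ) + 1) * (r + 1) / ((q + 2) * (r + 2))) *
          (((q : ℝ) + r + 4) * (q + r + 3) / ((q + r + 2) * (q + r + 1)))) := by
          rw [e0, e1]; field_simp
      _ ≤ c1 ^ 2 * (1 * (1 + 8 / (q + r + 4))) := by gcongr
      _ = _ := by ring
  have h1 : ∑ T ∈ P, (((A.filter fun i => ¬ (i ∈ T ↔ τ i ∈ T)).card : ℕ) : ℝ) = μ * P.card := by
    have := congrArg (Nat.cast (R := ℝ)) M1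
    push_cast at this
    rw [this, hcard]
    simp only [μ]
    field_simp
  have h2 : ∑ T ∈ P, (((A.filter fun i => ¬ (i ∈ T ↔ τ i ∈ T)).card : ℕ) : ℝ) ^ 2 ≤
      (μ + μ ^ 2 * (1 + 8 / (q + r + 4))) * P.card := by
    have := (Nat.cast_le (α := ℝ)).2 M2
    push_cast at this
    refine this.trans ?_
    rw [hcard, add_mul]
    apply add_le_add
    · apply le_of_eq
      simp only [μ]
      field_simp
    · have e : μ ^ 2 * (1 + 8 / (q + r + 4)) * c0 =
          (A.card : ℝ) ^ 2 * (4 * ((c1 ^ 2 * (1 + 8 / (q + r + 4))) / c0)) := by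
        simp only [μ]
        field_simp
        norm_num
      rw [e]
      gcongr
      rw [le_div_iff₀ p0']
      exact ratio
  refine (cheb P _ μ _ hμ h1 h2).trans ?_
  apply mul_le_mul_of_nonneg_right _ (Nat.cast_nonneg _)
  have hμd : η / 3 * (q + 2) ≤ μ := by
    have e : μ = A.card * (2 * ((q + 2) * (r + 2)) / ((q + r + 4) * (q + r + 3))) := by
      simp only [μ]
      rw [div_eq_iff p0'.ne', mul_div_assoc', div_mul_eq_mul_div, eq_div_iff (by positivity)]
      linear_combination (-2 * (A.card : ℝ)) * st2'
    rw [e]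
    calc η / 3 * ((q : ℝ) + 2) ≤
        (η / 3 * (q + r + 4)) * (2 * ((q + 2) * (r + 2)) / ((q + r + 4) * (q + r + 3))) := by
          rw [mul_div_assoc', le_div_iff₀ (by positivity)]
          have : (0 : ℝ) ≤ η / 3 * (q + 2) * (q + r + 4) := by positivity
          have h := mul_le_mul_of_nonneg_left
            (by linarith : (q : ℝ) + r + 3 ≤ 2 * (r + 2)) this
          calc _ = η / 3 * (q + 2) * (q + r + 4) * ((q : ℝ) + r + 3) := by ring
            _ ≤ _ := h
            _ = _ := by ring
      _ ≤ _ := by gcongr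
  have hD : (0 : ℝ) < q + 2 := by linarith
  push_cast
  set D : ℝ := q + 2 with hDdef
  have hs : 0 < Real.sqrt D := Real.sqrt_pos.2 hD
  have hs1 : Real.sqrt D * Real.sqrt D = D := Real.mul_self_sqrt hD.le
  have hs2 : 1 ≤ Real.sqrt D := Real.one_le_sqrt.2 (by linarith)
  have hinv : 1 / D ≤ 1 / Real.sqrt D := by
    apply one_div_le_one_div_of_le hs
    nlinarith
  have b1 : Real.sqrt (2 / μ) ≤ Real.sqrt (6 / η) * (1 / Real.sqrt D) := by
    rw [← Real.sqrt_one, ← Real.sqrt_div zero_le_one, ← Real.sqrt_mul (by positivity)]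
    apply Real.sqrt_le_sqrt
    calc 2 / μ ≤ 2 / (η / 3 * D) := by gcongr
      _ = _ := by field_simp; norm_num
  have b2 : 4 / μ ≤ 12 / η * (1 / Real.sqrt D) := by
    calc 4 / μ ≤ 4 / (η / 3 * D) := by gcongr
      _ = 12 / η * (1 / D) := by field_simp; norm_num
      _ ≤ _ := by gcongr
  have b3 : 4 * (8 / ((q : ℝ) + r + 4)) ≤ 20 * (1 / Real.sqrt D) := by
    calc 4 * (8 / ((q : ℝ) + r + 4)) ≤ 4 * (8 / (2 * D)) := by
          gcongr; linarith
      _ = 16 * (1 / D) := by field_simp; norm_num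
      _ ≤ 20 * (1 / Real.sqrt D) := by
          apply mul_le_mul (by norm_num) hinv (by positivity) (by norm_num)
  calc _ ≤ Real.sqrt (6 / η) * (1 / Real.sqrt D) + 12 / η * (1 / Real.sqrt D) +
        20 * (1 / Real.sqrt D) := by linarith
    _ = _ := by ring

theorem corank_boosting_symmetric (η : ℝ) (hη₁ : 0 < η) (hη₂ : η < 1 / 2) :
    ∃ C : ℝ, 0 < C ∧
      ∀ (n : ℕ) (A : Matrix (Fin n) (Fin n) ℝ) (E : Finset (Fin n)) (d : ℕ)
        (z : Fin n → ℝ),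
        A.IsSymm →
        (n : ℝ) * (1 - η / 3) ≤ (E.card : ℝ) →
        1 ≤ d → 2 * d ≤ E.card →
        (∀ i ∉ E, z i = 0 ∨ z i = 1) →
        (∃ v : Fin n → ℝ, A.mulVec v = 0 ∧ IsBalancedVec η v) →
        (1 - C / Real.sqrt d) * ((Finset.powersetCard d E).card : ℝ) ≤
          (((Finset.powersetCard d E).filter fun T =>
            (appendRowCol A (xVec E T z)).rank = A.rank + 2).card : ℝ) := by
  refine ⟨Real.sqrt (6 / η) + 12 / η + 20, by positivity, ?_⟩
  intro n A E d z hA hE hd hdE _ ⟨v, hv, hbal⟩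
  set C := Real.sqrt (6 / η) + 12 / η + 20 with hC
  have hC20 : 20 ≤ C := by
    have : 0 ≤ Real.sqrt (6 / η) + 12 / η := by positivity
    linarith
  have hdpos : (0 : ℝ) < d := by exact_mod_cast hd
  have hs : 0 < Real.sqrt d := Real.sqrt_pos.2 hdpos
  by_cases hd10 : 10 ≤ d
  · obtain ⟨τ, h1, h2, c, h3⟩ := exists_involution E v
    have hk : η / 3 * E.card ≤ ((Finset.univ.filter fun i => i < τ i).card : ℝ) := by
      set B : Finset (Fin n) := Finset.univ.filter fun i => i < τ i with hB
      have hsub : E ⊆ (B ∪ B.image τ) ∪ Finset.univ.filter fun i => v i = c := by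
        intro i hi
        rw [Finset.mem_union, Finset.mem_union]
        rcases lt_trichotomy i (τ i) with h | h | h
        · left; left; simp [hB, h]
        · right; simpa using h3 i hi h.symm
        · left; right
          refine Finset.mem_image.2 ⟨τ i, ?_, h1 i⟩
          simp [hB, h1 i, h]
      have hc1 := (Finset.card_le_card hsub).trans ((Finset.card_union_le _ _).trans
        (Nat.add_le_add_right ((Finset.card_union_le _ _).trans
          (Nat.add_le_add_left Finset.card_image_le _)) _))
      have hc2 : (E.card : ℝ) ≤ B.card + B.card +
          (Finset.univ.filter fun i => v i = c).card := by exact_mod_cast hc1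
      have hb := hbal c
      have e : {i | v i = c}.ncard = (Finset.univ.filter fun i => v i = c).card := by
        rw [← Set.ncard_coe_finset]
        congr 1
        ext i; simp
      rw [e] at hb
      have hn : (E.card : ℝ) ≤ n := by
        have := Finset.card_le_univ E
        rw [Fintype.card_fin] at this
        exact_mod_cast this
      nlinarith
    have hF := slice_final η hη₁ E v τ h1 h2 d hd10 hdE hk (- ∑ i ∈ Eᶜ, z i * v i)
    have hsplit := Finset.card_filter_add_card_filter_not (s := Finset.powersetCard d E)
      (fun T => (appendRowCol A (xVec E T z)).rank = A.rank + 2)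
    have hbad : ((Finset.powersetCard d E).filter fun T =>
        ¬ (appendRowCol A (xVec E T z)).rank = A.rank + 2).card ≤
        ((Finset.powersetCard d E).filter fun T =>
          ∑ i ∈ T, v i = - ∑ i ∈ Eᶜ, z i * v i).card := by
      apply Finset.card_le_card
      intro T hT
      rw [Finset.mem_filter] at hT ⊢
      refine ⟨hT.1, ?_⟩
      by_contra hne
      apply hT.2
      apply rank_add_two A _ v hA hv
      have hTE : T ⊆ E := (Finset.mem_powersetCard.1 hT.1).1
      have e : xVec E T z ⬝ᵥ v = ∑ i ∈ T, v i + ∑ i ∈ Eᶜ, z i * v i := by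
        rw [dotProduct, ← Finset.sum_add_sum_compl E]
        congr 1
        · rw [← Finset.sum_subset hTE]
          · refine Finset.sum_congr rfl fun i hi => ?_
            simp [xVec, hi]
          · intro i hi hi'
            simp [xVec, hi, hi']
        · refine Finset.sum_congr rfl fun i hi => ?_
          have hi' : i ∉ E := Finset.mem_compl.1 hi
          have hi2 : i ∉ T := fun h => hi' (hTE h)
          simp [xVec, hi', hi2]
      rw [e]
      intro h
      exact hne (by linarith)
    have hsplit' : (((Finset.powersetCard d E).filter fun T =>
        (appendRowCol A (xVec E T z)).rank = A.rank + 2).card : ℝ) +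
        ((Finset.powersetCard d E).filter fun T =>
        ¬ (appendRowCol A (xVec E T z)).rank = A.rank + 2).card =
        (Finset.powersetCard d E).card := by exact_mod_cast hsplit
    have hbad' := (Nat.cast_le (α := ℝ)).2 hbad
    rw [← hC] at hF
    linarith
  · have hle : Real.sqrt d ≤ C := by
      refine le_trans (Real.sqrt_le_sqrt (y := 16) ?_) ?_
      · have : d ≤ 16 := by omega
        exact_mod_cast this
      · rw [show (16 : ℝ) = 4 ^ 2 by norm_num, Real.sqrt_sq (by norm_num)]
        linarith
    have : 1 ≤ C / Real.sqrt d := (one_le_div hs).2 hle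
    refine le_trans ?_ (Nat.cast_nonneg _)
    exact mul_nonpos_of_nonpos_of_nonneg (by linarith) (Nat.cast_nonneg _)
end
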